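/- Assume condition (LD1). Then for any real numbers a < b, P(a ≤ W ≤ b) ≤ 0.625(b − a) + 4r₂ + 2.125r₃ + 4r₅, where r₂ = Σ_{i∈𝒥} E|X_iY_i|·1{|Y_i|>1}, r₃ = Σ_{i∈𝒥} E|X_i|(Y_i² ∧ 1), and r₅ = ∫_{|t|≤1} Var(K̂(t)) dt. -/

import Mathlib

open MeasureTheory ProbabilityTheory Real

theorem core_ineq {Ω : Type*} [MeasurableSpace Ω] {μ : Measure Ω} [IsProbabilityMeasure μ]
    (W : Ω → ℝ) (hW : Measurable W) (Kh : Ω × ℝ → ℝ) (hKm : Measurable Kh)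
    (hKi : Integrable Kh (μ.prod volume))
    (S : Ω → ℝ) (hS1 : Integrable S μ) (hS2 : Integrable (fun ω => S ω ^ 2) μ)
    (hKS : ∀ p, |Kh p| ≤ S p.1)
    (g : ℝ → ℝ) (hg : Measurable g) (hg0 : ∀ x, 0 ≤ g x) (hg1 : ∀ x, g x ≤ 1)
    (l u : ℝ) (hlu : l ≤ u) (hgs : ∀ x, x ∉ Set.Icc l u → g x = 0)
    (R Q C D : ℝ) (hD0 : 0 ≤ D)
    (hR : ∫ p, |Kh p| ∂(μ.prod (volume.restrict (Set.Icc (-1 : ℝ) 1)ᶜ)) ≤ R)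
    (hQ : ∫ p, |p.2| * |Kh p| ∂(μ.prod (volume.restrict (Set.Icc (-1 : ℝ) 1))) ≤ Q)
    (h1 : ∫ p, Kh p ∂(μ.prod volume) = 1)
    (hD : ∀ t, |(∫ ω, g (W ω + t) ∂μ) - ∫ ω, g (W ω) ∂μ| ≤ |t| * D)
    (hC : ∫ p, g (W p.1 + p.2) * Kh p ∂(μ.prod volume) ≤ C) :
    ∫ ω, g (W ω) ∂μ ≤ C + 2 * R + D * Q + (u - l) / 8 +
      2 * ∫ t in Set.Icc (-1 : ℝ) 1, variance (fun ω => Kh (ω, t)) μ := by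
  set I : Set ℝ := Set.Icc (-1 : ℝ) 1 with hI
  have hIm : MeasurableSet I := measurableSet_Icc
  set νI := μ.prod (volume.restrict I) with hνI
  set νJ := μ.prod (volume.restrict Iᶜ) with hνJ
  have hsplit : μ.prod volume = νI + νJ := by
    rw [hνI, hνJ, ← Measure.prod_add, Measure.restrict_add_restrict_compl hIm]
  have : IsFiniteMeasure (volume.restrict I) := ⟨by simp [hI]⟩
  have hfin : IsFiniteMeasure νI := by rw [hνI]; infer_instance
  have hKI : Integrable Kh νI := (hsplit ▸ hKi).left_of_add_measure
  have hKJ : Integrable Kh νJ := (hsplit ▸ hKi).right_of_add_measure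
  have hgm : Measurable (fun p : Ω × ℝ => g (W p.1 + p.2)) := by fun_prop
  have hgb : ∀ x, ‖g x‖ ≤ 1 := fun x => by rw [Real.norm_of_nonneg (hg0 x)]; exact hg1 x
  have hgKI : Integrable (fun p : Ω × ℝ => g (W p.1 + p.2) * Kh p) νI :=
    hKI.bdd_mul hgm.aestronglyMeasurable (Filter.Eventually.of_forall fun p => hgb _)
  have hgKJ : Integrable (fun p : Ω × ℝ => g (W p.1 + p.2) * Kh p) νJ :=
    hKJ.bdd_mul hgm.aestronglyMeasurable (Filter.Eventually.of_forall fun p => hgb _)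
  set K : ℝ → ℝ := fun t => ∫ ω, Kh (ω, t) ∂μ with hK
  have hKmeas : Measurable K :=
    (hKm.stronglyMeasurable.integral_prod_left' (μ := μ)).measurable
  set B := ∫ ω, S ω ∂μ with hB
  have hKB : ∀ t, |K t| ≤ B := fun t => by
    refine (abs_integral_le_integral_abs).trans (integral_mono_of_nonneg ?_ hS1 ?_)
    · exact Filter.Eventually.of_forall fun ω => abs_nonneg _
    · exact Filter.Eventually.of_forall fun ω => hKS (ω, t)
  have hKint : Integrable K (volume.restrict I) :=
    Integrable.of_bound hKmeas.aestronglyMeasurable B (Filter.Eventually.of_forall hKB)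
  have hK2m : Measurable (fun p : Ω × ℝ => K p.2) := hKmeas.comp measurable_snd
  set G : ℝ → ℝ := fun t => ∫ ω, g (W ω + t) ∂μ with hG
  have hGmeas : Measurable G :=
    (hgm.stronglyMeasurable.integral_prod_left' (μ := μ)).measurable
  have hG0 : ∀ t, 0 ≤ G t := fun t => integral_nonneg fun _ => hg0 _
  have hG1 : ∀ t, G t ≤ 1 := fun t => by
    have h : G t ≤ ∫ ω, (1 : ℝ) ∂μ := integral_mono_of_nonneg
      (Filter.Eventually.of_forall fun _ => hg0 _) (integrable_const _)
      (Filter.Eventually.of_forall fun _ => hg1 _)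
    simpa using h
  have hGz : ∫ ω, g (W ω) ∂μ = G 0 := by simp [hG]
  rw [hGz] at hD ⊢
  -- outside part
  have e1 : -R ≤ ∫ p, g (W p.1 + p.2) * Kh p ∂νJ := by
    have : |∫ p, g (W p.1 + p.2) * Kh p ∂νJ| ≤ R := by
      refine (abs_integral_le_integral_abs).trans (le_trans ?_ hR)
      refine integral_mono_of_nonneg (Filter.Eventually.of_forall fun _ => abs_nonneg _) hKJ.abs
        (Filter.Eventually.of_forall fun p => ?_)
      simp only [abs_mul, abs_of_nonneg (hg0 _)]
      exact mul_le_of_le_one_left (abs_nonneg _) (hg1 _)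
    exact (abs_le.1 this).1
  have e2 : ∫ p, g (W p.1 + p.2) * Kh p ∂(μ.prod volume) =
      ∫ p, g (W p.1 + p.2) * Kh p ∂νI + ∫ p, g (W p.1 + p.2) * Kh p ∂νJ := by
    rw [hsplit, integral_add_measure hgKI hgKJ]
  have e3 : 1 = ∫ p, Kh p ∂νI + ∫ p, Kh p ∂νJ := by
    rw [← h1, hsplit, integral_add_measure hKI hKJ]
  have e4 : ∫ p, Kh p ∂νJ ≤ R :=
    (le_abs_self _).trans ((abs_integral_le_integral_abs).trans hR)
  have e5 : ∫ p, Kh p ∂νI = ∫ t in I, K t := integral_prod_symm _ hKI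
  -- squares
  have hSint : Integrable (fun p : Ω × ℝ => 2 * (S p.1 ^ 2) + 2 * B ^ 2) νI := by
    have : Integrable (fun p : Ω × ℝ => S p.1 ^ 2) νI := hS2.comp_fst _
    exact (this.const_mul 2).add (integrable_const _)
  have hsq : Integrable (fun p : Ω × ℝ => (Kh p - K p.2) ^ 2) νI := by
    refine hSint.mono' (by fun_prop) (Filter.Eventually.of_forall fun p => ?_)
    rw [Real.norm_of_nonneg (sq_nonneg _)]
    have a1 : Kh p ^ 2 ≤ S p.1 ^ 2 := sq_le_sq' (abs_le.1 (hKS p)).1 (abs_le.1 (hKS p)).2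
    have a2 : K p.2 ^ 2 ≤ B ^ 2 := sq_le_sq' (abs_le.1 (hKB p.2)).1 (abs_le.1 (hKB p.2)).2
    nlinarith [sq_nonneg (Kh p + K p.2)]
  have hV : ∫ t in I, variance (fun ω => Kh (ω, t)) μ = ∫ p, (Kh p - K p.2) ^ 2 ∂νI := by
    rw [hνI, integral_prod_symm _ hsq]
    refine integral_congr_ae (Filter.Eventually.of_forall fun t => ?_)
    simp only []
    rw [variance_eq_integral (by fun_prop)]
  have hg2 : Integrable (fun p : Ω × ℝ => g (W p.1 + p.2) ^ 2) νI := by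
    refine Integrable.of_bound (hgm.pow_const 2).aestronglyMeasurable 1 (Filter.Eventually.of_forall fun p => ?_)
    rw [norm_pow]
    exact pow_le_one₀ (norm_nonneg _) (hgb _)
  have e6 : ∫ p, g (W p.1 + p.2) ^ 2 ∂νI ≤ u - l := by
    rw [hνI, integral_prod _ hg2]
    have : ∀ ω, ∫ t in I, g (W ω + t) ^ 2 ≤ u - l := fun ω => by
      have hi : Integrable ((Set.Icc (l - W ω) (u - W ω)).indicator (fun _ : ℝ => (1 : ℝ)))
          volume := by
        rw [integrable_indicator_iff measurableSet_Icc]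
        exact integrableOn_const (by simp)
      have hle : ∀ t, g (W ω + t) ^ 2 ≤
          (Set.Icc (l - W ω) (u - W ω)).indicator (fun _ : ℝ => (1 : ℝ)) t := fun t => by
        by_cases ht : t ∈ Set.Icc (l - W ω) (u - W ω)
        · rw [Set.indicator_of_mem ht]
          exact pow_le_one₀ (hg0 _) (hg1 _)
        · rw [Set.indicator_of_notMem ht, hgs]
          · simp
          · intro h; apply ht; exact ⟨by linarith [h.1], by linarith [h.2]⟩
      calc ∫ t in I, g (W ω + t) ^ 2 ≤
          ∫ t in I, (Set.Icc (l - W ω) (u - W ω)).indicator (fun _ : ℝ => (1 : ℝ)) t :=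
            integral_mono_of_nonneg (Filter.Eventually.of_forall fun _ => sq_nonneg _)
              hi.integrableOn (Filter.Eventually.of_forall hle)
        _ ≤ ∫ t, (Set.Icc (l - W ω) (u - W ω)).indicator (fun _ : ℝ => (1 : ℝ)) t :=
            setIntegral_le_integral hi (Filter.Eventually.of_forall fun t =>
              Set.indicator_nonneg (fun _ _ => zero_le_one) t)
        _ = u - l := by
            rw [integral_indicator measurableSet_Icc]
            simp [hlu]
    calc _ ≤ ∫ ω, (u - l) ∂μ := integral_mono_of_nonneg
              (Filter.Eventually.of_forall fun _ => integral_nonneg fun _ => sq_nonneg _)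
              (integrable_const _) (Filter.Eventually.of_forall this)
      _ = u - l := by simp
  -- the K part
  have hgK : Integrable (fun p : Ω × ℝ => g (W p.1 + p.2) * K p.2) νI := by
    refine Integrable.of_bound (hgm.mul hK2m).aestronglyMeasurable B (Filter.Eventually.of_forall fun p => ?_)
    rw [norm_mul]
    calc _ ≤ 1 * B := mul_le_mul (hgb _) (hKB _) (abs_nonneg _) zero_le_one
      _ = B := one_mul _
  have e7 : ∫ p, g (W p.1 + p.2) * K p.2 ∂νI - (1 / 8) * ∫ p, g (W p.1 + p.2) ^ 2 ∂νI
      - 2 * ∫ p, (Kh p - K p.2) ^ 2 ∂νI ≤ ∫ p, g (W p.1 + p.2) * Kh p ∂νI := by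
    have hA : Integrable (fun p : Ω × ℝ => g (W p.1 + p.2) * K p.2 -
        (1 / 8) * g (W p.1 + p.2) ^ 2) νI := hgK.sub (hg2.const_mul _)
    rw [← integral_const_mul, ← integral_const_mul, ← integral_sub hgK (hg2.const_mul _),
      ← integral_sub hA (hsq.const_mul _)]
    refine integral_mono (hA.sub (hsq.const_mul _)) hgKI fun p => ?_
    simp only []
    nlinarith [sq_nonneg (g (W p.1 + p.2) + 4 * (Kh p - K p.2))]
  have hGK : Integrable (fun t => G t * K t) (volume.restrict I) :=
    hKint.bdd_mul hGmeas.aestronglyMeasurable (c := 1) (Filter.Eventually.of_forall fun t => by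
      rw [Real.norm_of_nonneg (hG0 t)]; exact hG1 t)
  have e8 : ∫ p, g (W p.1 + p.2) * K p.2 ∂νI = ∫ t in I, G t * K t := by
    rw [hνI, integral_prod_symm _ hgK]
    refine integral_congr_ae (Filter.Eventually.of_forall fun t => ?_)
    simp only [hG]
    rw [integral_mul_const]
  have hqi : Integrable (fun p : Ω × ℝ => |p.2| * |Kh p|) νI := by
    refine Integrable.mono' (hKI.abs) (by fun_prop) ?_
    have hmem : ∀ᵐ p ∂νI, p.2 ∈ I :=
      Measure.quasiMeasurePreserving_snd.ae (ae_restrict_mem hIm)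
    filter_upwards [hmem] with p hp
    rw [Real.norm_of_nonneg (by positivity)]
    exact mul_le_of_le_one_left (abs_nonneg _) (abs_le.2 hp)
  have e9 : |∫ t in I, (G t - G 0) * K t| ≤ D * Q := by
    refine (abs_integral_le_integral_abs).trans ?_
    calc ∫ t in I, |(G t - G 0) * K t| ≤ ∫ t in I, D * ∫ ω, |t| * |Kh (ω, t)| ∂μ := by
          refine integral_mono_of_nonneg (Filter.Eventually.of_forall fun _ => abs_nonneg _)
            ((Integrable.integral_prod_right hqi).const_mul D)
            (Filter.Eventually.of_forall fun t => ?_)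
          simp only []
          rw [abs_mul, integral_const_mul]
          calc |G t - G 0| * |K t| ≤ (|t| * D) * ∫ ω, |Kh (ω, t)| ∂μ :=
                mul_le_mul (hD t) abs_integral_le_integral_abs (abs_nonneg _) (by positivity)
            _ = _ := by ring
      _ = D * ∫ p, |p.2| * |Kh p| ∂νI := by
          rw [integral_const_mul, hνI, integral_prod_symm _ hqi]
      _ ≤ D * Q := mul_le_mul_of_nonneg_left hQ hD0
  have e10 : ∫ t in I, G t * K t = G 0 * (∫ t in I, K t) + ∫ t in I, (G t - G 0) * K t := by
    have : ∀ t, (G t - G 0) * K t = G t * K t - G 0 * K t := fun t => by ring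
    simp_rw [this]
    rw [integral_sub hGK (hKint.const_mul _), integral_const_mul]
    ring
  have e11 := (abs_le.1 e9).1
  have hR0 : 0 ≤ R := le_trans (integral_nonneg fun _ => abs_nonneg _) hR
  have e12 : 1 - R ≤ ∫ t in I, K t := by rw [← e5]; linarith
  have e13 : G 0 - R ≤ G 0 * (∫ t in I, K t) := by
    nlinarith [mul_le_mul_of_nonneg_left e12 (hG0 0), mul_le_mul_of_nonneg_right (hG1 0) hR0]
  rw [hV]
  linarith

/-- positive part -/
noncomputable def pp (x : ℝ) : ℝ := max 0 x

theorem pp_of_nonneg {x : ℝ} (h : 0 ≤ x) : pp x = x := max_eq_right h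
theorem pp_of_nonpos {x : ℝ} (h : x ≤ 0) : pp x = 0 := max_eq_left h
theorem pp_cont : Continuous pp := by unfold pp; fun_prop

theorem pp_sq_deriv (x : ℝ) : HasDerivAt (fun x => pp x ^ 2) (2 * pp x) x := by
  have hne : ∀ y : ℝ, y ≠ 0 → HasDerivAt (fun x => pp x ^ 2) (2 * pp y) y := by
    intro y hy
    rcases lt_or_gt_of_ne hy with h | h
    · rw [pp_of_nonpos h.le]
      have : (fun x => pp x ^ 2) =ᶠ[nhds y] fun _ => 0 := by
        filter_upwards [Iio_mem_nhds h] with z hz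
        rw [pp_of_nonpos (le_of_lt hz)]; simp
      simpa using (hasDerivAt_const y (0 : ℝ)).congr_of_eventuallyEq this
    · rw [pp_of_nonneg h.le]
      have : (fun x => pp x ^ 2) =ᶠ[nhds y] fun x => x ^ 2 := by
        filter_upwards [Ioi_mem_nhds h] with z hz
        rw [pp_of_nonneg (le_of_lt hz)]
      simpa using (hasDerivAt_pow 2 y).congr_of_eventuallyEq this
  by_cases hx : x = 0
  · subst hx
    exact hasDerivAt_of_hasDerivAt_of_ne hne (pp_cont.pow 2).continuousAt
      (pp_cont.const_mul 2).continuousAt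
  · exact hne x hx

/-- ramp of height α starting at c -/
noncomputable def qq (α c w : ℝ) : ℝ := pp (w - c) - pp (w - c - α)

theorem qq_cont (α c : ℝ) : Continuous (qq α c) := by
  unfold qq
  exact (pp_cont.comp (by fun_prop)).sub (pp_cont.comp (by fun_prop))

theorem qq_nonneg {α : ℝ} (hα : 0 < α) (c w : ℝ) : 0 ≤ qq α c w := by
  unfold qq pp
  grind

theorem qq_le {α : ℝ} (hα : 0 < α) (c w : ℝ) : qq α c w ≤ α := by
  unfold qq pp
  grind

theorem qq_mono {α : ℝ} (hα : 0 < α) (c : ℝ) : Monotone (qq α c) := by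
  intro x y h
  unfold qq pp
  grind

theorem qq_incr {α : ℝ} (hα : 0 < α) (c w t : ℝ) (ht : 0 ≤ t) :
    qq α c (w + t) - qq α c w ≤
      ∫ s in Set.Icc 0 t, (Set.Icc c (c + α)).indicator (fun _ => (1 : ℝ)) (w + s) := by
  have : ∀ s, (Set.Icc c (c + α)).indicator (fun _ => (1 : ℝ)) (w + s) =
      (Set.Icc (c - w) (c + α - w)).indicator (fun _ => (1 : ℝ)) s := by
    intro s
    by_cases h : w + s ∈ Set.Icc c (c + α)
    · rw [Set.indicator_of_mem h, Set.indicator_of_mem]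
      exact ⟨by linarith [h.1], by linarith [h.2]⟩
    · rw [Set.indicator_of_notMem h, Set.indicator_of_notMem]
      intro h'; apply h; exact ⟨by linarith [h'.1], by linarith [h'.2]⟩
  simp_rw [this]
  rw [setIntegral_indicator measurableSet_Icc, Set.Icc_inter_Icc, setIntegral_const]
  simp only [smul_eq_mul, mul_one, Measure.real, Real.volume_Icc, ENNReal.toReal_ofReal']
  unfold qq pp
  grind

theorem qq_lip {Ω : Type*} [MeasurableSpace Ω] {μ : Measure Ω} [IsProbabilityMeasure μ]
    (W : Ω → ℝ) (hW : Measurable W) {α δ : ℝ} (hα : 0 < α)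
    (hδ : ∀ x, (μ {ω | x ≤ W ω ∧ W ω ≤ x + α}).toReal ≤ δ) (c t : ℝ) (ht : 0 ≤ t) :
    0 ≤ (∫ ω, qq α c (W ω + t) ∂μ) - ∫ ω, qq α c (W ω) ∂μ ∧
    (∫ ω, qq α c (W ω + t) ∂μ) - ∫ ω, qq α c (W ω) ∂μ ≤ t * δ := by
  have hm := (qq_cont α c).measurable
  have hi : ∀ s, Integrable (fun ω => qq α c (W ω + s)) μ := fun s =>
    Integrable.of_bound (hm.comp (hW.add_const s)).aestronglyMeasurable α (Filter.Eventually.of_forall fun ω => by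
      rw [Real.norm_of_nonneg (qq_nonneg hα _ _)]; exact qq_le hα _ _)
  have hi0 : Integrable (fun ω => qq α c (W ω)) μ := by simpa using hi 0
  rw [← integral_sub (hi t) hi0]
  refine ⟨integral_nonneg fun ω => sub_nonneg.2 (qq_mono hα c (by linarith)), ?_⟩
  have hfm : Measurable (fun p : Ω × ℝ =>
      (Set.Icc c (c + α)).indicator (fun _ => (1 : ℝ)) (W p.1 + p.2)) :=
    (measurable_const.indicator measurableSet_Icc).comp (by fun_prop : Measurable fun p : Ω × ℝ => W p.1 + p.2)
  have : IsFiniteMeasure (volume.restrict (Set.Icc 0 t)) := ⟨by simp⟩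
  have hfi : Integrable (fun p : Ω × ℝ =>
      (Set.Icc c (c + α)).indicator (fun _ => (1 : ℝ)) (W p.1 + p.2))
      (μ.prod (volume.restrict (Set.Icc 0 t))) := by
    refine Integrable.of_bound hfm.aestronglyMeasurable 1 (Filter.Eventually.of_forall fun p => ?_)
    by_cases h : W p.1 + p.2 ∈ Set.Icc c (c + α)
    · rw [Set.indicator_of_mem h]; simp
    · rw [Set.indicator_of_notMem h]; simp
  calc ∫ ω, qq α c (W ω + t) - qq α c (W ω) ∂μ
      ≤ ∫ ω, (∫ s in Set.Icc 0 t, (Set.Icc c (c + α)).indicator (fun _ => (1 : ℝ)) (W ω + s)) ∂μ :=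
        integral_mono ((hi t).sub hi0) hfi.integral_prod_left fun ω => qq_incr hα c _ t ht
    _ = ∫ s in Set.Icc 0 t, ∫ ω, (Set.Icc c (c + α)).indicator (fun _ => (1 : ℝ)) (W ω + s) ∂μ :=
        integral_integral_swap hfi
    _ ≤ ∫ s in Set.Icc 0 t, δ := by
        refine integral_mono hfi.integral_prod_right (integrable_const _) fun s => ?_
        have : (fun ω => (Set.Icc c (c + α)).indicator (fun _ => (1 : ℝ)) (W ω + s)) =
            {ω | c - s ≤ W ω ∧ W ω ≤ c - s + α}.indicator (fun _ => (1 : ℝ)) := by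
          ext ω
          simp only [Set.indicator, Set.mem_Icc, Set.mem_ofPred_eq]
          congr 1
          apply propext
          constructor <;> rintro ⟨h1, h2⟩ <;> constructor <;> linarith
        simp only [this]
        rw [integral_indicator (by measurability)]
        simpa [Measure.real] using hδ (c - s)
    _ = t * δ := by simp [ht]

theorem qq_shift (α c w s : ℝ) : qq α c (w + s) = qq α (c - s) w := by
  unfold qq; congr 2 <;> ring

/-- difference of ramps has the two-sided bound -/
theorem qq_diff {Ω : Type*} [MeasurableSpace Ω] {μ : Measure Ω} [IsProbabilityMeasure μ]
    (W : Ω → ℝ) (hW : Measurable W) {α δ : ℝ} (hα : 0 < α)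
    (hδ : ∀ x, (μ {ω | x ≤ W ω ∧ W ω ≤ x + α}).toReal ≤ δ) (c d t : ℝ) :
    |((∫ ω, qq α c (W ω + t) ∂μ) - ∫ ω, qq α d (W ω + t) ∂μ)
      - ((∫ ω, qq α c (W ω) ∂μ) - ∫ ω, qq α d (W ω) ∂μ)| ≤ |t| * δ := by
  rcases le_total 0 t with ht | ht
  · have h1 := qq_lip W hW hα hδ c t ht
    have h2 := qq_lip W hW hα hδ d t ht
    rw [abs_of_nonneg ht, abs_le]
    constructor <;> linarith [h1.1, h1.2, h2.1, h2.2]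
  · have h1 := qq_lip W hW hα hδ (c - t) (-t) (by linarith)
    have h2 := qq_lip W hW hα hδ (d - t) (-t) (by linarith)
    simp only [← qq_shift α _ _ t, neg_add_cancel_right] at h1 h2
    rw [abs_of_nonpos ht, abs_le]
    constructor <;> linarith [h1.1, h1.2, h2.1, h2.2]

/-- trapezoid -/
noncomputable def gg (a b α w : ℝ) : ℝ := (qq α (a - α) w - qq α b w) / α

noncomputable def ff (a b α w : ℝ) : ℝ :=
  (pp (w - a + α) ^ 2 - pp (w - a) ^ 2 - pp (w - b) ^ 2 + pp (w - b - α) ^ 2) / (2 * α)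
    - (b - a + α) / 2

theorem gg_cont (a b α : ℝ) : Continuous (gg a b α) := by
  unfold gg
  exact ((qq_cont _ _).sub (qq_cont _ _)).div_const _

theorem gg_nonneg {a b α : ℝ} (hab : a ≤ b) (hα : 0 < α) (w : ℝ) : 0 ≤ gg a b α w := by
  unfold gg
  apply div_nonneg _ hα.le
  unfold qq pp
  grind

theorem gg_le {a b α : ℝ} (hα : 0 < α) (w : ℝ) : gg a b α w ≤ 1 := by
  unfold gg
  rw [div_le_one hα]
  linarith [qq_le hα (a - α) w, qq_nonneg hα b w]

theorem gg_one {a b α : ℝ} (hα : 0 < α) (w : ℝ) (h1 : a ≤ w) (h2 : w ≤ b) :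
    gg a b α w = 1 := by
  unfold gg
  rw [div_eq_one_iff_eq hα.ne']
  unfold qq pp
  grind

theorem gg_supp {a b α : ℝ} (hab : a ≤ b) (hα : 0 < α) (w : ℝ) (h : w ∉ Set.Icc (a - α) (b + α)) :
    gg a b α w = 0 := by
  have h' : ¬ (a - α ≤ w ∧ w ≤ b + α) := h
  unfold gg
  rw [div_eq_zero_iff]; left
  unfold qq pp
  grind

theorem ff_deriv {a b α : ℝ} (hα : 0 < α) (w : ℝ) :
    HasDerivAt (ff a b α) (gg a b α w) w := by
  have h1 := (pp_sq_deriv (w - a + α)).comp w (((hasDerivAt_id w).sub_const a).add_const α)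
  have h2 := (pp_sq_deriv (w - a)).comp w ((hasDerivAt_id w).sub_const a)
  have h3 := (pp_sq_deriv (w - b)).comp w ((hasDerivAt_id w).sub_const b)
  have h4 := (pp_sq_deriv (w - b - α)).comp w (((hasDerivAt_id w).sub_const b).sub_const α)
  have h := ((((h1.sub h2).sub h3).add h4).div_const (2 * α)).sub_const ((b - a + α) / 2)
  refine h.congr_deriv ?_
  unfold gg qq
  have e1 : w - (a - α) = w - a + α := by ring
  have e2 : w - a + α - α = w - a := by ring
  rw [e1, e2]
  field_simp
  ring

theorem ff_cont {a b α : ℝ} (hα : 0 < α) : Continuous (ff a b α) :=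
  continuous_iff_continuousAt.2 fun w => (ff_deriv hα w).continuousAt

theorem ff_mono {a b α : ℝ} (hab : a ≤ b) (hα : 0 < α) : Monotone (ff a b α) :=
  monotone_of_deriv_nonneg (fun w => (ff_deriv hα w).differentiableAt)
    (fun w => by rw [(ff_deriv hα w).deriv]; exact gg_nonneg hab hα w)

theorem ff_bound {a b α : ℝ} (hab : a ≤ b) (hα : 0 < α) (w : ℝ) :
    |ff a b α w| ≤ (b - a + α) / 2 := by
  rw [abs_le]
  constructor
  · have h := ff_mono hab hα (min_le_left w (a - α))
    have h' := min_le_right w (a - α)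
    refine le_trans (le_of_eq ?_) h
    unfold ff
    rw [pp_of_nonpos, pp_of_nonpos, pp_of_nonpos, pp_of_nonpos]
    · simp
    all_goals linarith
  · have h := ff_mono hab hα (le_max_left w (b + α))
    have h' := le_max_right w (b + α)
    refine le_trans h (le_of_eq ?_)
    unfold ff
    rw [pp_of_nonneg, pp_of_nonneg, pp_of_nonneg, pp_of_nonneg]
    · field_simp
      ring
    all_goals linarith

theorem gg_lip {Ω : Type*} [MeasurableSpace Ω] {μ : Measure Ω} [IsProbabilityMeasure μ]
    (W : Ω → ℝ) (hW : Measurable W) {α δ : ℝ} (hα : 0 < α)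
    (hδ : ∀ x, (μ {ω | x ≤ W ω ∧ W ω ≤ x + α}).toReal ≤ δ) (a b t : ℝ) :
    |(∫ ω, gg a b α (W ω + t) ∂μ) - ∫ ω, gg a b α (W ω) ∂μ| ≤ |t| * (δ / α) := by
  have hi : ∀ c s, Integrable (fun ω => qq α c (W ω + s)) μ := fun c s =>
    Integrable.of_bound ((qq_cont α c).measurable.comp (hW.add_const s)).aestronglyMeasurable α
      (Filter.Eventually.of_forall fun ω => by
      rw [Real.norm_of_nonneg (qq_nonneg hα _ _)]; exact qq_le hα _ _)
  have hi0 : ∀ c, Integrable (fun ω => qq α c (W ω)) μ := fun c => by simpa using hi c 0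
  unfold gg
  rw [integral_div, integral_div, integral_sub (hi _ _) (hi _ _), integral_sub (hi0 _) (hi0 _),
    ← sub_div, abs_div, abs_of_pos hα, ← mul_div_assoc]
  exact div_le_div_of_nonneg_right (qq_diff W hW hα hδ _ _ t) hα.le

noncomputable def kk (y t : ℝ) : ℝ :=
  (if -y ≤ t ∧ t < 0 then (1 : ℝ) else 0) - (if 0 ≤ t ∧ t ≤ -y then (1 : ℝ) else 0)

theorem kk_abs_le (y t : ℝ) : |kk y t| ≤ 1 := by
  unfold kk
  split_ifs <;> norm_num

theorem kk_meas : Measurable (fun p : ℝ × ℝ => kk p.1 p.2) := by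
  have a1 : MeasurableSet {p : ℝ × ℝ | -p.1 ≤ p.2} :=
    measurableSet_le measurable_fst.neg measurable_snd
  have a2 : MeasurableSet {p : ℝ × ℝ | p.2 < 0} :=
    measurableSet_lt measurable_snd measurable_const
  have a3 : MeasurableSet {p : ℝ × ℝ | 0 ≤ p.2} :=
    measurableSet_le measurable_const measurable_snd
  have a4 : MeasurableSet {p : ℝ × ℝ | p.2 ≤ -p.1} :=
    measurableSet_le measurable_snd measurable_fst.neg
  unfold kk
  exact Measurable.sub (Measurable.ite (a1.inter a2) measurable_const measurable_const)
    (Measurable.ite (a3.inter a4) measurable_const measurable_const)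

theorem kk_ae (y : ℝ) : ∀ᵐ t : ℝ, t ≠ 0 ∧ t ≠ -y := by
  have h1 : ∀ᵐ t : ℝ, t ≠ 0 := by simp [ae_iff]
  have h2 : ∀ᵐ t : ℝ, t ≠ -y := by simp [ae_iff]
  exact h1.and h2

theorem kk_pos {y : ℝ} (hy : 0 ≤ y) :
    ∀ᵐ t : ℝ, kk y t = (Set.Ioc (-y) 0).indicator (fun _ => (1 : ℝ)) t := by
  filter_upwards [kk_ae y] with t ht
  unfold kk
  simp only [Set.indicator, Set.mem_Ioc]
  grind

theorem kk_neg {y : ℝ} (hy : y ≤ 0) :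
    ∀ᵐ t : ℝ, kk y t = -(Set.Ioc 0 (-y)).indicator (fun _ => (1 : ℝ)) t := by
  filter_upwards [kk_ae y] with t ht
  unfold kk
  simp only [Set.indicator, Set.mem_Ioc]
  grind

theorem kk_int (y : ℝ) (h : ℝ → ℝ) : ∫ t, h t * kk y t = ∫ t in (-y)..0, h t := by
  rcases le_total 0 y with hy | hy
  · rw [intervalIntegral.integral_of_le (by linarith), ← integral_indicator measurableSet_Ioc]
    refine integral_congr_ae ?_
    filter_upwards [kk_pos hy] with t ht
    rw [ht]
    simp [Set.indicator]
  · rw [intervalIntegral.integral_of_ge (by linarith), ← integral_indicator measurableSet_Ioc,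
      ← integral_neg]
    refine integral_congr_ae ?_
    filter_upwards [kk_neg hy] with t ht
    rw [ht]
    simp only [Set.indicator]
    split_ifs <;> simp

theorem kk_abs_ae (y : ℝ) :
    ∀ᵐ t : ℝ, |kk y t| = (Set.uIoc (-y) 0).indicator (fun _ => (1 : ℝ)) t := by
  rcases le_total 0 y with hy | hy
  · filter_upwards [kk_pos hy] with t ht
    rw [ht, Set.uIoc_of_le (by linarith)]
    simp only [Set.indicator]
    split_ifs <;> simp
  · filter_upwards [kk_neg hy] with t ht
    rw [ht, Set.uIoc_of_ge (by linarith)]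
    simp only [Set.indicator]
    split_ifs <;> simp

theorem kk_meas' (y : ℝ) : Measurable (kk y) :=
  kk_meas.comp (measurable_const.prodMk measurable_id)

theorem kk_integrable (y : ℝ) : Integrable (kk y) := by
  have : Integrable (fun t => |kk y t|) := by
    refine Integrable.congr (f := (Set.uIoc (-y) 0).indicator (fun _ => (1 : ℝ))) ?_ ?_
    · rw [integrable_indicator_iff measurableSet_uIoc]
      exact integrableOn_const (by simp [Set.uIoc])
    · filter_upwards [kk_abs_ae y] with t ht using ht.symm
  exact (integrable_norm_iff (kk_meas' y).aestronglyMeasurable).1 this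

theorem kk_abs_int (y : ℝ) : ∫ t, |kk y t| = |y| := by
  rw [integral_congr_ae (kk_abs_ae y), integral_indicator measurableSet_uIoc]
  simp [Set.uIoc, Measure.real, max_sub_min_eq_abs]

theorem kk_abs_out (y : ℝ) :
    ∫ t in (Set.Icc (-1 : ℝ) 1)ᶜ, |kk y t| ≤ if 1 < |y| then |y| else 0 := by
  split_ifs with h
  · rw [← kk_abs_int y]
    exact setIntegral_le_integral (kk_integrable y).abs
      (Filter.Eventually.of_forall fun _ => abs_nonneg _)
  · refine le_of_eq ?_
    rw [setIntegral_congr_fun (g := fun _ => (0 : ℝ)) measurableSet_Icc.compl]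
    · simp
    · intro t ht
      have ht' : ¬ (-1 ≤ t ∧ t ≤ 1) := ht
      have h' := abs_le.1 (not_lt.1 h)
      simp only [abs_eq_zero]
      unfold kk
      grind

theorem kk_abs_in (y : ℝ) :
    ∫ t in Set.Icc (-1 : ℝ) 1, |t| * |kk y t| ≤ min (y ^ 2) 1 / 2 := by
  rw [← integral_indicator measurableSet_Icc]
  have key : ∀ m : ℝ, 0 ≤ m → m = min |y| 1 → m ^ 2 = min (y ^ 2) 1 := by
    rintro m hm rfl
    rcases le_total |y| 1 with h | h
    · rw [min_eq_left h, sq_abs, min_eq_left]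
      rw [← sq_abs]; exact pow_le_one₀ (abs_nonneg _) h
    · rw [min_eq_right h, min_eq_right]
      · simp
      · rw [← sq_abs]; exact one_le_pow₀ h
  set m := min |y| 1 with hm
  have hm0 : 0 ≤ m := le_min (abs_nonneg _) zero_le_one
  rw [← key m hm0 rfl]
  rcases le_total 0 y with hy | hy
  · rw [abs_of_nonneg hy] at hm
    refine le_of_eq ?_
    have hm1 : m ≤ y := hm ▸ min_le_left _ _
    have hm2 : m ≤ 1 := hm ▸ min_le_right _ _
    calc _ = ∫ t, (Set.Ioc (-m) 0).indicator (fun t => -t) t := by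
          refine integral_congr_ae ?_
          filter_upwards [kk_pos hy, kk_ae 1] with t ht ht1
          by_cases h1 : t ∈ Set.Ioc (-m) 0
          · rw [Set.indicator_of_mem h1, Set.indicator_of_mem, ht, Set.indicator_of_mem,
              abs_of_nonpos h1.2]
            · simp
            · exact ⟨by linarith [h1.1], h1.2⟩
            · exact ⟨by linarith [h1.1], by linarith [h1.2]⟩
          · rw [Set.indicator_of_notMem h1]
            by_cases h2 : t ∈ Set.Icc (-1 : ℝ) 1
            · rw [Set.indicator_of_mem h2, ht, Set.indicator_of_notMem]
              · simp
              · intro h3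
                apply h1
                refine ⟨?_, h3.2⟩
                have h4 : -1 < t := lt_of_le_of_ne h2.1 (Ne.symm ht1.2)
                have h5 : -t < m := by rw [hm]; exact lt_min (by linarith [h3.1]) (by linarith)
                linarith
            · rw [Set.indicator_of_notMem h2]
      _ = m ^ 2 / 2 := by
          rw [integral_indicator measurableSet_Ioc,
            ← intervalIntegral.integral_of_le (by linarith), intervalIntegral.integral_neg,
            integral_id]
          ring
  · rw [abs_of_nonpos hy] at hm
    refine le_of_eq ?_
    have hm1 : m ≤ -y := hm ▸ min_le_left _ _
    have hm2 : m ≤ 1 := hm ▸ min_le_right _ _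
    calc _ = ∫ t, (Set.Ioc 0 m).indicator (fun t => t) t := by
          refine integral_congr_ae ?_
          filter_upwards [kk_neg hy] with t ht
          by_cases h1 : t ∈ Set.Ioc 0 m
          · rw [Set.indicator_of_mem h1, Set.indicator_of_mem, ht, Set.indicator_of_mem,
              abs_of_nonneg h1.1.le]
            · simp
            · exact ⟨h1.1, by linarith [h1.2]⟩
            · exact ⟨by linarith [h1.1], by linarith [h1.2]⟩
          · rw [Set.indicator_of_notMem h1]
            by_cases h2 : t ∈ Set.Icc (-1 : ℝ) 1
            · rw [Set.indicator_of_mem h2, ht, Set.indicator_of_notMem]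
              · simp
              · intro h3
                apply h1
                refine ⟨h3.1, ?_⟩
                rw [hm]; exact le_min h3.2 h2.2
            · rw [Set.indicator_of_notMem h2]
      _ = m ^ 2 / 2 := by
          rw [integral_indicator measurableSet_Ioc,
            ← intervalIntegral.integral_of_le (by linarith), integral_id]
          ring

section Piece
variable {Ω : Type*} [MeasurableSpace Ω] {μ : Measure Ω} [IsProbabilityMeasure μ]

theorem piece_meas {X Y : Ω → ℝ} (hX : Measurable X) (hY : Measurable Y) :
    Measurable (fun p : Ω × ℝ => X p.1 * kk (Y p.1) p.2) :=
  (hX.comp measurable_fst).mul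
    (kk_meas.comp ((hY.comp measurable_fst).prodMk measurable_snd))

theorem piece_int {X Y : Ω → ℝ} (hX : Measurable X) (hY : Measurable Y)
    (hX2 : MemLp X 2 μ) (hY2 : MemLp Y 2 μ) :
    Integrable (fun p : Ω × ℝ => X p.1 * kk (Y p.1) p.2) (μ.prod volume) := by
  rw [integrable_prod_iff (piece_meas hX hY).aestronglyMeasurable]
  refine ⟨Filter.Eventually.of_forall fun ω => (kk_integrable (Y ω)).const_mul (X ω), ?_⟩
  have : ∀ ω, ∫ t, ‖X ω * kk (Y ω) t‖ = ‖X ω * Y ω‖ := fun ω => by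
    simp only [norm_mul]
    rw [integral_const_mul]
    simp only [Real.norm_eq_abs]
    rw [kk_abs_int]
  simp only [this]
  exact (MemLp.integrable_mul hX2 hY2).norm

theorem piece_out {X Y : Ω → ℝ} (hX : Measurable X) (hY : Measurable Y)
    (hX2 : MemLp X 2 μ) (hY2 : MemLp Y 2 μ) :
    ∫ p, |X p.1 * kk (Y p.1) p.2| ∂(μ.prod (volume.restrict (Set.Icc (-1 : ℝ) 1)ᶜ)) ≤
      ∫ ω, (if 1 < |Y ω| then |X ω * Y ω| else 0) ∂μ := by
  have hi : Integrable (fun p : Ω × ℝ => X p.1 * kk (Y p.1) p.2)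
      (μ.prod (volume.restrict (Set.Icc (-1 : ℝ) 1)ᶜ)) :=
    (piece_int hX hY hX2 hY2).mono_measure (Measure.prod_mono le_rfl Measure.restrict_le_self)
  rw [integral_prod _ hi.abs]
  refine integral_mono_of_nonneg (Filter.Eventually.of_forall fun ω =>
    integral_nonneg fun _ => abs_nonneg _) ?_ (Filter.Eventually.of_forall fun ω => ?_)
  · refine (MemLp.integrable_mul hX2 hY2).abs.mono' ?_ (Filter.Eventually.of_forall fun ω => ?_)
    · exact (Measurable.ite (measurableSet_lt measurable_const hY.abs) (hX.mul hY).abs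
        measurable_const).aestronglyMeasurable
    · split_ifs
      · simp
      · rw [norm_zero]; exact abs_nonneg _
  · simp only [abs_mul]
    rw [integral_const_mul]
    calc _ ≤ |X ω| * (if 1 < |Y ω| then |Y ω| else 0) :=
          mul_le_mul_of_nonneg_left (kk_abs_out _) (abs_nonneg _)
      _ ≤ _ := by split_ifs <;> simp

theorem piece_in {X Y : Ω → ℝ} (hX : Measurable X) (hY : Measurable Y)
    (hX2 : MemLp X 2 μ) (hY2 : MemLp Y 2 μ) :
    Integrable (fun p : Ω × ℝ => |p.2| * |X p.1 * kk (Y p.1) p.2|)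
      (μ.prod (volume.restrict (Set.Icc (-1 : ℝ) 1))) ∧
    ∫ p, |p.2| * |X p.1 * kk (Y p.1) p.2| ∂(μ.prod (volume.restrict (Set.Icc (-1 : ℝ) 1))) ≤
      (∫ ω, |X ω| * min (Y ω ^ 2) 1 ∂μ) / 2 := by
  have hi : Integrable (fun p : Ω × ℝ => X p.1 * kk (Y p.1) p.2)
      (μ.prod (volume.restrict (Set.Icc (-1 : ℝ) 1))) :=
    (piece_int hX hY hX2 hY2).mono_measure (Measure.prod_mono le_rfl Measure.restrict_le_self)
  have hqi : Integrable (fun p : Ω × ℝ => |p.2| * |X p.1 * kk (Y p.1) p.2|)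
      (μ.prod (volume.restrict (Set.Icc (-1 : ℝ) 1))) := by
    refine Integrable.mono' hi.abs
      ((measurable_snd.abs).mul (piece_meas hX hY).abs).aestronglyMeasurable ?_
    have hmem : ∀ᵐ p ∂(μ.prod (volume.restrict (Set.Icc (-1 : ℝ) 1))), p.2 ∈ Set.Icc (-1 : ℝ) 1 :=
      Measure.quasiMeasurePreserving_snd.ae (ae_restrict_mem measurableSet_Icc)
    filter_upwards [hmem] with p hp
    rw [Real.norm_of_nonneg (by positivity)]
    exact mul_le_of_le_one_left (abs_nonneg _) (abs_le.2 hp)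
  refine ⟨hqi, ?_⟩
  rw [integral_prod _ hqi, ← integral_div]
  refine integral_mono_of_nonneg (Filter.Eventually.of_forall fun ω =>
    integral_nonneg fun _ => by positivity) ?_ (Filter.Eventually.of_forall fun ω => ?_)
  · refine Integrable.div_const ?_ 2
    refine (hX2.integrable (by norm_num)).abs.mono' ?_ (Filter.Eventually.of_forall fun ω => ?_)
    · exact (hX.abs.mul ((hY.pow_const 2).min measurable_const)).aestronglyMeasurable
    · rw [Real.norm_of_nonneg (by positivity)]
      exact mul_le_of_le_one_right (abs_nonneg _) (min_le_right _ _)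
  · have : ∀ t, |t| * |X ω * kk (Y ω) t| = |X ω| * (|t| * |kk (Y ω) t|) := fun t => by
      rw [abs_mul]; ring
    simp only [this]
    rw [integral_const_mul, mul_div_assoc]
    exact mul_le_mul_of_nonneg_left (kk_abs_in _) (abs_nonneg _)

theorem piece_stein {X Y W : Ω → ℝ} (hX : Measurable X) (hY : Measurable Y) (hW : Measurable W)
    (hX2 : MemLp X 2 μ) (hY2 : MemLp Y 2 μ) (f g : ℝ → ℝ) (hg : Continuous g)
    (hg1 : ∀ x, |g x| ≤ 1) (hf : ∀ x, HasDerivAt f (g x) x) :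
    Integrable (fun p : Ω × ℝ => g (W p.1 + p.2) * (X p.1 * kk (Y p.1) p.2)) (μ.prod volume) ∧
    ∫ p, g (W p.1 + p.2) * (X p.1 * kk (Y p.1) p.2) ∂(μ.prod volume) =
      ∫ ω, X ω * (f (W ω) - f (W ω - Y ω)) ∂μ := by
  have hm : Measurable (fun p : Ω × ℝ => g (W p.1 + p.2)) :=
    hg.measurable.comp ((hW.comp measurable_fst).add measurable_snd)
  have hi : Integrable (fun p : Ω × ℝ => g (W p.1 + p.2) * (X p.1 * kk (Y p.1) p.2))
      (μ.prod volume) :=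
    (piece_int hX hY hX2 hY2).bdd_mul hm.aestronglyMeasurable
      (Filter.Eventually.of_forall fun p => hg1 _)
  refine ⟨hi, ?_⟩
  rw [integral_prod _ hi]
  refine integral_congr_ae (Filter.Eventually.of_forall fun ω => ?_)
  have : ∀ t, g (W ω + t) * (X ω * kk (Y ω) t) = X ω * (g (W ω + t) * kk (Y ω) t) :=
    fun t => by ring
  simp only [this]
  rw [integral_const_mul, kk_int (Y ω) (fun t => g (W ω + t)),
    intervalIntegral.integral_comp_add_left (fun t => g t),
    intervalIntegral.integral_eq_sub_of_hasDerivAt (fun x _ => hf x)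
      (hg.intervalIntegrable _ _)]
  simp [sub_eq_add_neg]

theorem indep_zero {ι : Type*} [Fintype ι] [DecidableEq ι]
    (X : ι → Ω → ℝ) (A : Finset ι) (i : ι) (hXmeas : ∀ i, Measurable (X i))
    (hmean : ∫ ω, X i ω ∂μ = 0)
    (hLD : IndepFun (X i) (fun ω => fun j : ((A)ᶜ : Finset ι) => X j.1 ω) μ)
    (W Y : Ω → ℝ) (hW : ∀ ω, W ω = ∑ i, X i ω) (hY : ∀ ω, Y ω = ∑ j ∈ A, X j ω)
    (f : ℝ → ℝ) (hf : Measurable f) :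
    ∫ ω, X i ω * f (W ω - Y ω) ∂μ = 0 := by
  have hφ : Measurable (fun z : ((A)ᶜ : Finset ι) → ℝ => f (∑ j, z j)) :=
    hf.comp (Finset.measurable_sum _ fun j _ => measurable_pi_apply j)
  have hWY : ∀ ω, W ω - Y ω = ∑ j : ((A)ᶜ : Finset ι), X j.1 ω := fun ω => by
    rw [hW, hY, ← Finset.sum_add_sum_compl A (fun i => X i ω), add_sub_cancel_left,
      ← Finset.sum_coe_sort]
  have h := hLD.comp measurable_id hφ
  have hm : Measurable (fun ω => fun j : ((A)ᶜ : Finset ι) => X j.1 ω) :=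
    measurable_pi_lambda _ fun j => hXmeas _
  have h2 := h.integral_mul_eq_mul_integral (hXmeas i).aestronglyMeasurable
    (hφ.comp hm).aestronglyMeasurable
  have e : (fun ω => X i ω * f (W ω - Y ω)) = (id ∘ X i) *
      ((fun z : ((A)ᶜ : Finset ι) → ℝ => f (∑ j, z j)) ∘
        (fun ω => fun j : ((A)ᶜ : Finset ι) => X j.1 ω)) := by
    ext ω
    simp [hWY]
  rw [e, h2]
  simp [hmean]

end Piece

theorem conc_step
    {Ω : Type*} [MeasurableSpace Ω] {μ : Measure Ω} [IsProbabilityMeasure μ]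
    {ι : Type*} [Fintype ι] [DecidableEq ι]
    (X : ι → Ω → ℝ) (A : ι → Finset ι)
    (hXmeas : ∀ i, Measurable (X i))
    (hXmean : ∀ i, ∫ ω, X i ω ∂μ = 0)
    (hXsq : ∀ i, Integrable (fun ω => (X i ω) ^ 2) μ)
    (hLD1 : ∀ i, IndepFun (X i) (fun ω => fun j : ((A i)ᶜ : Finset ι) => X j.1 ω) μ)
    (W : Ω → ℝ) (hW : ∀ ω, W ω = ∑ i, X i ω) (hWm : Measurable W)
    (hWvar : ∫ ω, (W ω) ^ 2 ∂μ = 1)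
    (Y : ι → Ω → ℝ) (hY : ∀ i ω, Y i ω = ∑ j ∈ A i, X j ω)
    (r2 r3 r5 : ℝ)
    (hr2 : r2 = ∑ i, ∫ ω, (if 1 < |Y i ω| then |X i ω * Y i ω| else 0) ∂μ)
    (hr3 : r3 = ∑ i, ∫ ω, |X i ω| * min ((Y i ω) ^ 2) 1 ∂μ)
    (hr5 : r5 = ∫ t in Set.Icc (-1 : ℝ) 1,
      variance (fun ω => ∑ i, X i ω * kk (Y i ω) t) μ)
    (α δ : ℝ) (hα : 0 < α) (hrα : r3 ≤ α)
    (hδ : ∀ x, (μ {ω | x ≤ W ω ∧ W ω ≤ x + α}).toReal ≤ δ)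
    (a b : ℝ) (hab : a < b) :
    (μ {ω | a ≤ W ω ∧ W ω ≤ b}).toReal ≤
      0.625 * (b - a) + 0.75 * α + 2 * r2 + 2 * r5 + δ / 2 := by
  have hX2 : ∀ i, MemLp (X i) 2 μ := fun i =>
    (memLp_two_iff_integrable_sq (hXmeas i).aestronglyMeasurable).2 (hXsq i)
  have hYm : ∀ i, Measurable (Y i) := fun i => by
    rw [show Y i = fun ω => ∑ j ∈ A i, X j ω from funext (hY i)]
    exact Finset.measurable_sum _ fun j _ => hXmeas j
  have hY2 : ∀ i, MemLp (Y i) 2 μ := fun i => by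
    rw [show Y i = fun ω => ∑ j ∈ A i, X j ω from funext (hY i)]
    exact memLp_finsetSum _ fun j _ => hX2 j
  have hW2 : MemLp W 2 μ := by
    rw [show W = fun ω => ∑ j, X j ω from funext hW]
    exact memLp_finsetSum _ fun j _ => hX2 j
  have hX1 : ∀ i, Integrable (X i) μ := fun i => (hX2 i).integrable (by norm_num)
  have hδ0 : 0 ≤ δ := le_trans ENNReal.toReal_nonneg (hδ 0)
  -- the Stein identity
  have stein : ∀ f g : ℝ → ℝ, Continuous g → (∀ x, |g x| ≤ 1) → (∀ x, HasDerivAt f (g x) x) →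
      (∀ i, Integrable (fun ω => X i ω * f (W ω)) μ) →
      (∀ i, Integrable (fun ω => X i ω * f (W ω - Y i ω)) μ) →
      ∫ p, g (W p.1 + p.2) * (∑ i, X i p.1 * kk (Y i p.1) p.2) ∂(μ.prod volume) =
        ∫ ω, W ω * f (W ω) ∂μ := by
    intro f g hg hg1 hf h1 h2
    have hfm : Measurable f :=
      (continuous_iff_continuousAt.2 fun w => (hf w).continuousAt).measurable
    simp only [Finset.mul_sum]
    rw [integral_finsetSum _ fun i _ =>
      (piece_stein (hXmeas i) (hYm i) hWm (hX2 i) (hY2 i) f g hg hg1 hf).1]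
    have hWf : ∀ ω, W ω * f (W ω) = ∑ i, X i ω * f (W ω) := fun ω => by
      rw [← Finset.sum_mul, ← hW ω]
    simp only [hWf]
    rw [integral_finsetSum _ fun i _ => h1 i]
    refine Finset.sum_congr rfl fun i _ => ?_
    rw [(piece_stein (hXmeas i) (hYm i) hWm (hX2 i) (hY2 i) f g hg hg1 hf).2]
    simp only [mul_sub]
    rw [integral_sub (h1 i) (h2 i),
      indep_zero X (A i) i hXmeas (hXmean i) (hLD1 i) W (Y i) hW (hY i) f hfm, sub_zero]
  have hone : ∫ p, (∑ i, X i p.1 * kk (Y i p.1) p.2) ∂(μ.prod volume) = 1 := by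
    have := stein id (fun _ => 1) continuous_const (by simp) (fun x => hasDerivAt_id x)
      (fun i => MemLp.integrable_mul (hX2 i) hW2)
      (fun i => MemLp.integrable_mul (hX2 i) (hW2.sub (hY2 i)))
    simp only [one_mul, id] at this
    rw [this, ← hWvar]
    simp only [sq]
  have hab' := hab.le
  have hfm : Measurable (ff a b α) := (ff_cont hα).measurable
  have hC : ∫ p, gg a b α (W p.1 + p.2) * (∑ i, X i p.1 * kk (Y i p.1) p.2) ∂(μ.prod volume)
      ≤ (b - a + α) / 2 := by
    rw [stein (ff a b α) (gg a b α) (gg_cont _ _ _)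
      (fun x => by rw [abs_of_nonneg (gg_nonneg hab' hα x)]; exact gg_le hα x)
      (ff_deriv hα)
      (fun i => (hX1 i).mul_bdd (hfm.comp hWm).aestronglyMeasurable
        (Filter.Eventually.of_forall fun ω => ff_bound hab' hα _))
      (fun i => (hX1 i).mul_bdd (hfm.comp (hWm.sub (hYm i))).aestronglyMeasurable
        (Filter.Eventually.of_forall fun ω => ff_bound hab' hα _))]
    have hWs : Integrable (fun ω => W ω ^ 2) μ := hW2.integrable_sq
    have hc : 0 ≤ (b - a + α) / 2 := by linarith
    calc _ ≤ ∫ ω, (b - a + α) / 2 * ((1 + W ω ^ 2) / 2) ∂μ := by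
          refine integral_mono ((hW2.integrable (by norm_num)).mul_bdd
            (hfm.comp hWm).aestronglyMeasurable
            (Filter.Eventually.of_forall fun ω => ff_bound hab' hα _))
            ((((integrable_const 1).add hWs).div_const 2).const_mul _) fun ω => ?_
          calc W ω * ff a b α (W ω) ≤ |W ω * ff a b α (W ω)| := le_abs_self _
            _ = |ff a b α (W ω)| * |W ω| := by rw [abs_mul, mul_comm]
            _ ≤ (b - a + α) / 2 * ((1 + W ω ^ 2) / 2) := by
                refine mul_le_mul (ff_bound hab' hα _) ?_ (abs_nonneg _) hc
                rw [← sq_abs]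
                nlinarith [sq_nonneg (|W ω| - 1)]
      _ = (b - a + α) / 2 := by
          rw [integral_const_mul, integral_div, integral_add (integrable_const 1) hWs, hWvar]
          simp
  have hR : ∫ p, |∑ i, X i p.1 * kk (Y i p.1) p.2|
      ∂(μ.prod (volume.restrict (Set.Icc (-1 : ℝ) 1)ᶜ)) ≤ r2 := by
    have hi : ∀ i, Integrable (fun p : Ω × ℝ => |X i p.1 * kk (Y i p.1) p.2|)
        (μ.prod (volume.restrict (Set.Icc (-1 : ℝ) 1)ᶜ)) := fun i =>
      ((piece_int (hXmeas i) (hYm i) (hX2 i) (hY2 i)).mono_measure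
        (Measure.prod_mono le_rfl Measure.restrict_le_self)).abs
    calc _ ≤ ∫ p, ∑ i, |X i p.1 * kk (Y i p.1) p.2|
          ∂(μ.prod (volume.restrict (Set.Icc (-1 : ℝ) 1)ᶜ)) :=
          integral_mono_of_nonneg (Filter.Eventually.of_forall fun _ => abs_nonneg _)
            (integrable_finsetSum _ fun i _ => hi i)
            (Filter.Eventually.of_forall fun _ => Finset.abs_sum_le_sum_abs _ _)
      _ ≤ r2 := by
          rw [integral_finsetSum _ fun i _ => hi i, hr2]
          exact Finset.sum_le_sum fun i _ => piece_out (hXmeas i) (hYm i) (hX2 i) (hY2 i)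
  have hQ : ∫ p, |p.2| * |∑ i, X i p.1 * kk (Y i p.1) p.2|
      ∂(μ.prod (volume.restrict (Set.Icc (-1 : ℝ) 1))) ≤ r3 / 2 := by
    have hi := fun i => (piece_in (hXmeas i) (hYm i) (hX2 i) (hY2 i)).1
    calc _ ≤ ∫ p, ∑ i, |p.2| * |X i p.1 * kk (Y i p.1) p.2|
          ∂(μ.prod (volume.restrict (Set.Icc (-1 : ℝ) 1))) :=
          integral_mono_of_nonneg (Filter.Eventually.of_forall fun _ => by positivity)
            (integrable_finsetSum _ fun i _ => hi i)
            (Filter.Eventually.of_forall fun _ => by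
              simp only [← Finset.mul_sum]
              exact mul_le_mul_of_nonneg_left (Finset.abs_sum_le_sum_abs _ _) (abs_nonneg _))
      _ ≤ r3 / 2 := by
          rw [integral_finsetSum _ fun i _ => hi i, hr3, Finset.sum_div]
          exact Finset.sum_le_sum fun i _ => (piece_in (hXmeas i) (hYm i) (hX2 i) (hY2 i)).2
  have hS : MemLp (fun ω => ∑ i, |X i ω|) 2 μ := memLp_finsetSum _ fun i _ => (hX2 i).abs
  have hcore := core_ineq W hWm (fun p => ∑ i, X i p.1 * kk (Y i p.1) p.2)
    (Finset.measurable_sum _ fun i _ => piece_meas (hXmeas i) (hYm i))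
    (integrable_finsetSum _ fun i _ => piece_int (hXmeas i) (hYm i) (hX2 i) (hY2 i))
    (fun ω => ∑ i, |X i ω|) (hS.integrable (by norm_num)) hS.integrable_sq
    (fun p => (Finset.abs_sum_le_sum_abs _ _).trans (Finset.sum_le_sum fun i _ => by
      rw [abs_mul]
      exact mul_le_of_le_one_right (abs_nonneg _) (kk_abs_le _ _)))
    (gg a b α) (gg_cont _ _ _).measurable (gg_nonneg hab' hα) (gg_le hα)
    (a - α) (b + α) (by linarith) (gg_supp hab' hα) r2 (r3 / 2) ((b - a + α) / 2) (δ / α)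
    (by positivity) hR hQ hone (gg_lip W hWm hα hδ a b) hC
  simp only [← hr5] at hcore
  have hP : (μ {ω | a ≤ W ω ∧ W ω ≤ b}).toReal ≤ ∫ ω, gg a b α (W ω) ∂μ := by
    have hms : MeasurableSet {ω | a ≤ W ω ∧ W ω ≤ b} := hWm measurableSet_Icc
    have : (μ {ω | a ≤ W ω ∧ W ω ≤ b}).toReal =
        ∫ ω, {ω | a ≤ W ω ∧ W ω ≤ b}.indicator (fun _ => (1 : ℝ)) ω ∂μ := by
      rw [integral_indicator hms]
      simp [Measure.real]
    rw [this]
    refine integral_mono ((integrable_const 1).indicator hms)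
      (Integrable.of_bound ((gg_cont a b α).measurable.comp hWm).aestronglyMeasurable 1
        (Filter.Eventually.of_forall fun ω => by
          rw [Real.norm_of_nonneg (gg_nonneg hab' hα _)]; exact gg_le hα _)) fun ω => ?_
    by_cases h : ω ∈ {ω | a ≤ W ω ∧ W ω ≤ b}
    · rw [Set.indicator_of_mem h, gg_one hα _ h.1 h.2]
    · rw [Set.indicator_of_notMem h]; exact gg_nonneg hab' hα _
  have hDQ : δ / α * (r3 / 2) ≤ δ / 2 := by
    calc δ / α * (r3 / 2) ≤ δ / α * (α / 2) :=
          mul_le_mul_of_nonneg_left (by linarith) (by positivity)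
      _ = δ / 2 := by field_simp
  linarith

theorem stmt_11
    {Ω : Type*} [MeasurableSpace Ω] {μ : Measure Ω} [IsProbabilityMeasure μ]
    {ι : Type*} [Fintype ι] [DecidableEq ι]
    (X : ι → Ω → ℝ) (A : ι → Finset ι)
    (hXmeas : ∀ i, Measurable (X i))
    (hXmean : ∀ i, ∫ ω, X i ω ∂μ = 0)
    (hXsq : ∀ i, Integrable (fun ω => (X i ω) ^ 2) μ)
    (hiA : ∀ i, i ∈ A i)
    (hLD1 : ∀ i, IndepFun (X i) (fun ω => fun j : ((A i)ᶜ : Finset ι) => X j.1 ω) μ)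
    (W : Ω → ℝ) (hW : ∀ ω, W ω = ∑ i, X i ω)
    (hWvar : ∫ ω, (W ω) ^ 2 ∂μ = 1)
    (Y : ι → Ω → ℝ) (hY : ∀ i ω, Y i ω = ∑ j ∈ A i, X j ω)
    (Khat : ℝ → Ω → ℝ)
    (hKhat : ∀ t ω, Khat t ω = ∑ i, X i ω *
      ((if -(Y i ω) ≤ t ∧ t < 0 then (1 : ℝ) else 0)
        - (if 0 ≤ t ∧ t ≤ -(Y i ω) then (1 : ℝ) else 0)))
    (r2 r3 r5 : ℝ)
    (hr2 : r2 = ∑ i, ∫ ω, (if 1 < |Y i ω| then |X i ω * Y i ω| else 0) ∂μ)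
    (hr3 : r3 = ∑ i, ∫ ω, |X i ω| * min ((Y i ω) ^ 2) 1 ∂μ)
    (hr5 : r5 = ∫ t in Set.Icc (-1 : ℝ) 1, variance (Khat t) μ) :
    ∀ a b : ℝ, a < b →
      (μ {ω | a ≤ W ω ∧ W ω ≤ b}).toReal ≤
        0.625 * (b - a) + 4 * r2 + 2.125 * r3 + 4 * r5 := by
  have hWm : Measurable W := by
    rw [show W = fun ω => ∑ j, X j ω from funext hW]
    exact Finset.measurable_sum _ fun j _ => hXmeas j
  have hr5' : r5 = ∫ t in Set.Icc (-1 : ℝ) 1,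
      variance (fun ω => ∑ i, X i ω * kk (Y i ω) t) μ := by
    rw [hr5]
    have : ∀ t, Khat t = fun ω => ∑ i, X i ω * kk (Y i ω) t := fun t => funext (hKhat t)
    simp only [this]
  have step := conc_step X A hXmeas hXmean hXsq hLD1 W hW hWm hWvar Y hY r2 r3 r5 hr2 hr3 hr5'
  intro a b hab
  refine le_of_forall_pos_le_add fun ε hε => ?_
  have hr30 : 0 ≤ r3 := by
    rw [hr3]
    exact Finset.sum_nonneg fun i _ => integral_nonneg fun ω => by positivity
  obtain ⟨α, hα, hrα, hαε⟩ : ∃ α, 0 < α ∧ r3 ≤ α ∧ 2.125 * α ≤ 2.125 * r3 + ε :=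
    ⟨r3 + ε / 3, by linarith, by linarith, by linarith⟩
  set δ : ℝ := ⨆ x : ℝ, (μ {ω | x ≤ W ω ∧ W ω ≤ x + α}).toReal with hδdef
  have hbdd : BddAbove (Set.range fun x : ℝ => (μ {ω | x ≤ W ω ∧ W ω ≤ x + α}).toReal) := by
    refine ⟨1, ?_⟩
    rintro _ ⟨x, rfl⟩
    exact ENNReal.toReal_le_of_le_ofReal zero_le_one (by simpa using prob_le_one)
  have hδ : ∀ x, (μ {ω | x ≤ W ω ∧ W ω ≤ x + α}).toReal ≤ δ := fun x => le_ciSup hbdd x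
  have h1 : δ ≤ 1.375 * α + 2 * r2 + 2 * r5 + δ / 2 := by
    refine ciSup_le fun x => ?_
    have := step α δ hα hrα hδ x (x + α) (by linarith)
    linarith
  have h2 := step α δ hα hrα hδ a b hab
  linarith
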